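/- Let P be a finite set of n points in ℝ^d partitioned into pairwise disjoint nonempty clusters Opt_1, …, Opt_k. For each j let m_j be the mean of Opt_j, δ_j² its variance, β_j = |Opt_j|/n, and set δ_opt² = ∑_{j=1}^k β_j·δ_j². Let ε > 0 and suppose points p_{v_1}, …, p_{v_k} ∈ ℝ^d satisfy ||p_{v_j} − m_j|| ≤ ε·δ_j + (1+ε)·j·√(ε/β_j)·δ_opt for every 1 ≤ j ≤ k. Then ∑_{j=1}^k ∑_{p∈Opt_j} ||p − p_{v_j}||² ≤ (1 + 2ε²)·n·δ_opt² + 2(1+ε)²·k³·ε·n·δ_opt². -/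

import Mathlib

/-!
For a single cluster `Q` with mean `m`, the parallel axis identity gives
`∑_{q ∈ Q} ‖q - x‖² = |Q| δ(Q)² + |Q| ‖x - m‖²` (`sum_sq_dist_eq`). Inserting the bound on
`‖x - m‖` and using `(a + b)² ≤ 2a² + 2b²`, the second summand is at most
`2 ε² |Q| δ(Q)² + 2 (1 + ε)² j² ε n δ_opt²`: the factor `|Q|` cancels against the `1 / β_j`
from the square root. Bounding `j ≤ k` and summing over the `k` clusters gives the claim, since
`∑_j |Opt_j| δ_j² = n δ_opt²`.
-/

/-- The mean of a finite set of points in `ℝ^d`. -/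
noncomputable def fmean {d : ℕ} (Q : Finset (EuclideanSpace ℝ (Fin d))) :
    EuclideanSpace ℝ (Fin d) :=
  (Q.card : ℝ)⁻¹ • ∑ q ∈ Q, q

/-- The variance of a finite set of points in `ℝ^d`. -/
noncomputable def fvar {d : ℕ} (Q : Finset (EuclideanSpace ℝ (Fin d))) : ℝ :=
  (Q.card : ℝ)⁻¹ * ∑ q ∈ Q, ‖q - fmean Q‖ ^ 2

theorem card_mul_fvar {d : ℕ} {Q : Finset (EuclideanSpace ℝ (Fin d))} (hQ : Q.Nonempty) :
    (Q.card : ℝ) * fvar Q = ∑ q ∈ Q, ‖q - fmean Q‖ ^ 2 := by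
  have hc : (Q.card : ℝ) ≠ 0 := by exact_mod_cast hQ.card_ne_zero
  rw [fvar, mul_inv_cancel_left₀ hc]

theorem fvar_nonneg {d : ℕ} (Q : Finset (EuclideanSpace ℝ (Fin d))) : 0 ≤ fvar Q := by
  unfold fvar
  positivity

theorem sum_sub_fmean {d : ℕ} {Q : Finset (EuclideanSpace ℝ (Fin d))} (hQ : Q.Nonempty) :
    ∑ q ∈ Q, (q - fmean Q) = 0 := by
  have hc : (Q.card : ℝ) ≠ 0 := by exact_mod_cast hQ.card_ne_zero
  rw [Finset.sum_sub_distrib, Finset.sum_const, ← Nat.cast_smul_eq_nsmul ℝ, fmean,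
    smul_inv_smul₀ hc, sub_self]

/-- The parallel axis identity: the cross terms vanish because the deviations from the mean
sum to zero. -/
theorem sum_sq_dist_eq {d : ℕ} {Q : Finset (EuclideanSpace ℝ (Fin d))} (hQ : Q.Nonempty)
    (x : EuclideanSpace ℝ (Fin d)) :
    ∑ q ∈ Q, ‖q - x‖ ^ 2 = Q.card * fvar Q + Q.card * ‖x - fmean Q‖ ^ 2 := by
  have h : ∀ q ∈ Q, ‖q - x‖ ^ 2 =
      ‖q - fmean Q‖ ^ 2 - 2 * inner ℝ (q - fmean Q) (x - fmean Q) + ‖x - fmean Q‖ ^ 2 := by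
    intro q _
    rw [← norm_sub_sq_real, sub_sub_sub_cancel_right]
  rw [Finset.sum_congr rfl h, Finset.sum_add_distrib, Finset.sum_sub_distrib, ← Finset.mul_sum,
    ← sum_inner, sum_sub_fmean hQ, inner_zero_left, card_mul_fvar hQ]
  simp

/-- The cost of one cluster of size `c` and variance `v`, where `D` stands for `δ_opt²`, `r` for
the distance from the chosen centre to the mean, and `t` for the index of the cluster. -/
theorem cluster_bound {c n v D ε r t k : ℝ} (hc : 0 < c) (hn : 0 < n) (hv : 0 ≤ v) (hD : 0 ≤ D)
    (hε : 0 < ε) (hr : 0 ≤ r) (ht : 0 ≤ t) (htk : t ≤ k)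
    (h : r ≤ ε * √v + (1 + ε) * t * √(ε / (c / n)) * √D) :
    c * v + c * r ^ 2 ≤ (1 + 2 * ε ^ 2) * (c * v) + 2 * (1 + ε) ^ 2 * k ^ 2 * ε * n * D := by
  have h1 : r ^ 2 ≤ 2 * ((ε * √v) ^ 2 + ((1 + ε) * t * √(ε / (c / n)) * √D) ^ 2) :=
    (pow_le_pow_left₀ hr h 2).trans add_sq_le
  have hs : 0 ≤ ε / (c / n) := by positivity
  simp only [mul_pow, Real.sq_sqrt hv, Real.sq_sqrt hD, Real.sq_sqrt hs] at h1
  have h2 : c * r ^ 2 ≤ 2 * ε ^ 2 * (c * v) + 2 * (1 + ε) ^ 2 * t ^ 2 * ε * n * D := by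
    calc c * r ^ 2 ≤ c * (2 * (ε ^ 2 * v + (1 + ε) ^ 2 * t ^ 2 * (ε / (c / n)) * D)) := by gcongr
      _ = _ := by field_simp
  have h3 : 2 * (1 + ε) ^ 2 * t ^ 2 * ε * n * D ≤ 2 * (1 + ε) ^ 2 * k ^ 2 * ε * n * D := by
    gcongr
  linarith

theorem stmt_9 {d k : ℕ} (P : Finset (EuclideanSpace ℝ (Fin d)))
    (Opts : Fin k → Finset (EuclideanSpace ℝ (Fin d)))
    (hP : P.Nonempty)
    (hne : ∀ j, (Opts j).Nonempty)
    (hdisj : ∀ j₁ j₂, j₁ ≠ j₂ → Disjoint (Opts j₁) (Opts j₂))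
    (hsub : ∀ j, Opts j ⊆ P)
    (hcover : ∀ p ∈ P, ∃ j, p ∈ Opts j)
    (ε : ℝ) (hε : 0 < ε)
    (pv : Fin k → EuclideanSpace ℝ (Fin d))
    (hpv : ∀ j : Fin k, ‖pv j - fmean (Opts j)‖ ≤
      ε * Real.sqrt (fvar (Opts j)) +
        (1 + ε) * ((j : ℕ) + 1) *
          Real.sqrt (ε / (((Opts j).card : ℝ) / P.card)) *
          Real.sqrt (∑ i : Fin k, (((Opts i).card : ℝ) / P.card) * fvar (Opts i))) :
    ∑ j : Fin k, ∑ p ∈ Opts j, ‖p - pv j‖ ^ 2 ≤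
      (1 + 2 * ε ^ 2) * P.card *
          (∑ i : Fin k, (((Opts i).card : ℝ) / P.card) * fvar (Opts i)) +
        2 * (1 + ε) ^ 2 * k ^ 3 * ε * P.card *
          (∑ i : Fin k, (((Opts i).card : ℝ) / P.card) * fvar (Opts i)) := by
  have hn : (0 : ℝ) < P.card := by exact_mod_cast hP.card_pos
  set D := ∑ i : Fin k, (((Opts i).card : ℝ) / P.card) * fvar (Opts i) with hDdef
  have hD : 0 ≤ D := Finset.sum_nonneg fun i _ => mul_nonneg (by positivity) (fvar_nonneg _)
  have hsum : ∑ j : Fin k, ((Opts j).card : ℝ) * fvar (Opts j) = P.card * D := by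
    rw [hDdef, Finset.mul_sum]
    refine Finset.sum_congr rfl fun i _ => ?_
    field_simp
  have key : ∀ j ∈ (Finset.univ : Finset (Fin k)), ∑ p ∈ Opts j, ‖p - pv j‖ ^ 2 ≤
      (1 + 2 * ε ^ 2) * ((Opts j).card * fvar (Opts j)) +
        2 * (1 + ε) ^ 2 * (k : ℝ) ^ 2 * ε * P.card * D := by
    intro j _
    rw [sum_sq_dist_eq (hne j)]
    have hc : (0 : ℝ) < (Opts j).card := by exact_mod_cast (hne j).card_pos
    exact cluster_bound hc hn (fvar_nonneg _) hD hε (norm_nonneg _) (by positivity)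
      (by exact_mod_cast j.isLt) (hpv j)
  refine (Finset.sum_le_sum key).trans_eq ?_
  rw [Finset.sum_add_distrib, ← Finset.mul_sum, hsum, Finset.sum_const, Finset.card_univ,
    Fintype.card_fin, nsmul_eq_mul]
  ring
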